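/- (Explicit averaged speed formula for shears with Ornstein–Uhlenbeck covariance.) Let A > 0 and ρ > 0. Let (Ω, ℱ, P) be a probability space and b : Ω × [0,L] → ℝ jointly measurable such that for P-a.e. ω the path y ↦ b(ω,y) is continuous, E[ b(ω,y) ] = 0 for all y ∈ [0,L], E[ b(ω,s) b(ω,y) ] = ρ e^{−A|s−y|} for all s,y ∈ [0,L], and E[ ‖b(ω,·)‖_∞⁶ ] < ∞. Set enh := ρ · ( e^{−AL}( 4/(L²A⁴) − 1/(3A²) ) + L/(3A) − 4/(L²A⁴) − 5/(3A²) + 4/(L A³) ). Then there exist C > 0 and δ₀ > 0 such that for all δ ∈ (0, δ₀): | E[ c*(δ·b(ω,·)) ] − c₀ − (c₀ δ²/2)·enh | ≤ C δ³. -/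

import Mathlib

open Real Set MeasureTheory intervalIntegral

/-- The principal Neumann eigenvalue `μ_b(λ)` of
`ψ'' + (λ² + λ b(y) + a) ψ = μ ψ` on `(0, L)`, defined through the Rayleigh
quotient variational characterization
`μ_b(λ) = sup { ∫₀ᴸ (−ψ'² + (λ² + λ b + a) ψ²) / ∫₀ᴸ ψ² : ψ ∈ H¹((0,L)), ψ ≠ 0 }`. -/
noncomputable def mu (L a : ℝ) (b : ℝ → ℝ) (l : ℝ) : ℝ :=
  sSup { m : ℝ | ∃ ψ : ℝ → ℝ, ContDiffOn ℝ 1 ψ (Icc 0 L) ∧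
    (∃ y ∈ Icc (0 : ℝ) L, ψ y ≠ 0) ∧
    m = (∫ y in (0 : ℝ)..L, (-(deriv ψ y) ^ 2 + (l ^ 2 + l * b y + a) * (ψ y) ^ 2)) /
        (∫ y in (0 : ℝ)..L, (ψ y) ^ 2) }

/-- The KPP minimal front speed `c*(b) = inf_{λ>0} μ_b(λ)/λ`. -/
noncomputable def cstar (L a : ℝ) (b : ℝ → ℝ) : ℝ :=
  sInf { v : ℝ | ∃ l : ℝ, 0 < l ∧ v = mu L a b l / l }

/-- The sup norm `‖b‖_∞ = sup_{y ∈ [0,L]} |b(y)|` of a shear on the cross-section. -/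
noncomputable def supNorm (L : ℝ) (b : ℝ → ℝ) : ℝ :=
  sSup ((fun y => |b y|) '' Icc 0 L)


def muSet (L a : ℝ) (b : ℝ → ℝ) (l : ℝ) : Set ℝ :=
  { m : ℝ | ∃ ψ : ℝ → ℝ, ContDiffOn ℝ 1 ψ (Icc 0 L) ∧
    (∃ y ∈ Icc (0 : ℝ) L, ψ y ≠ 0) ∧
    m = (∫ y in (0 : ℝ)..L, (-(deriv ψ y) ^ 2 + (l ^ 2 + l * b y + a) * (ψ y) ^ 2)) /
        (∫ y in (0 : ℝ)..L, (ψ y) ^ 2) }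

lemma mu_eq_sSup (L a : ℝ) (b : ℝ → ℝ) (l : ℝ) : mu L a b l = sSup (muSet L a b l) := rfl

lemma mu_congr {L a : ℝ} (hL : 0 < L) {b b' : ℝ → ℝ} (h : ∀ y ∈ Icc 0 L, b y = b' y) (l : ℝ) :
    mu L a b l = mu L a b' l := by
  have key : ∀ ψ : ℝ → ℝ, (∫ y in (0 : ℝ)..L, (-(deriv ψ y) ^ 2 + (l ^ 2 + l * b y + a) * (ψ y) ^ 2))
      = (∫ y in (0 : ℝ)..L, (-(deriv ψ y) ^ 2 + (l ^ 2 + l * b' y + a) * (ψ y) ^ 2)) := by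
    intro ψ
    apply intervalIntegral.integral_congr
    intro y hy
    rw [uIcc_of_le hL.le] at hy
    simp only [h y hy]
  unfold mu
  simp only [key]

lemma cstar_congr {L a : ℝ} (hL : 0 < L) {b b' : ℝ → ℝ} (h : ∀ y ∈ Icc 0 L, b y = b' y) :
    cstar L a b = cstar L a b' := by
  unfold cstar
  simp only [mu_congr hL h]

lemma psi_pos {L : ℝ} (hL : 0 < L) {ψ : ℝ → ℝ} (hψ : ContinuousOn ψ (Icc 0 L))
    (hne : ∃ y ∈ Icc (0 : ℝ) L, ψ y ≠ 0) : 0 < ∫ y in (0 : ℝ)..L, (ψ y) ^ 2 := by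
  obtain ⟨c, hc, hc0⟩ := hne
  apply intervalIntegral.integral_pos hL (hψ.pow 2)
  · intro x _; exact sq_nonneg _
  · exact ⟨c, hc, by simpa using sq_pos_iff.2 hc0⟩

lemma num_eq {L : ℝ} (hL : 0 < L) {V ψ : ℝ → ℝ} :
    (∫ y in (0 : ℝ)..L, (-(deriv ψ y) ^ 2 + V y * (ψ y) ^ 2)) =
    (∫ y in (0 : ℝ)..L, (-(derivWithin ψ (Icc 0 L) y) ^ 2 + V y * (ψ y) ^ 2)) := by
  apply intervalIntegral.integral_congr_Ioo_of_le hL.le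
  intro y hy
  simp only
  rw [derivWithin_of_mem_nhds (Icc_mem_nhds hy.1 hy.2)]

lemma add_zero' {x : ℝ} (h : x = 0) (y : ℝ) : y = y + x := by simp [h]

lemma parts {L : ℝ} (hL : 0 < L) {ψ w w' : ℝ → ℝ}
    (hψ : ContDiffOn ℝ 1 ψ (Icc 0 L)) (hw' : Continuous w')
    (hw : ∀ y, HasDerivAt w (w' y) y) (h0 : w 0 = 0) (h1 : w L = 0) :
    (∫ y in (0 : ℝ)..L, (w' y * (ψ y) ^ 2 +
      w y * (2 * ψ y * derivWithin ψ (Icc 0 L) y))) = 0 := by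
  have hwc : Continuous w := continuous_iff_continuousAt.2 fun y => (hw y).continuousAt
  have hD : ContinuousOn (derivWithin ψ (Icc 0 L)) (Icc 0 L) :=
    hψ.continuousOn_derivWithin (uniqueDiffOn_Icc hL) le_rfl
  have hc := hψ.continuousOn
  rw [intervalIntegral.integral_eq_sub_of_hasDerivAt_of_le (f := fun y => w y * (ψ y)^2) hL.le]
  · simp [h0, h1]
  · exact hwc.continuousOn.mul (hc.pow 2)
  · intro y hy
    have h2 : HasDerivAt ψ (derivWithin ψ (Icc 0 L) y) y := by
      have := (hψ.differentiableOn one_ne_zero y (Ioo_subset_Icc_self hy)).hasDerivWithinAt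
      exact this.hasDerivAt (Icc_mem_nhds hy.1 hy.2)
    have := (hw y).mul (h2.pow 2)
    refine this.congr_deriv ?_
    simp
  · apply ContinuousOn.intervalIntegrable_of_Icc hL.le
    fun_prop

lemma muSet_le {L a l : ℝ} (hL : 0 < L) {b w w' : ℝ → ℝ} (hb : Continuous b) (hw' : Continuous w')
    (hw : ∀ y, HasDerivAt w (w' y) y) (h0 : w 0 = 0) (h1 : w L = 0) {K : ℝ}
    (hK : ∀ y ∈ Icc 0 L, l ^ 2 + l * b y + a + w' y + w y ^ 2 ≤ K) :
    ∀ m ∈ muSet L a b l, m ≤ K := by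
  rintro m ⟨ψ, hψ, hne, rfl⟩
  have hwc : Continuous w := continuous_iff_continuousAt.2 fun y => (hw y).continuousAt
  have hD : ContinuousOn (derivWithin ψ (Icc 0 L)) (Icc 0 L) :=
    hψ.continuousOn_derivWithin (uniqueDiffOn_Icc hL) le_rfl
  have hc := hψ.continuousOn
  rw [div_le_iff₀ (psi_pos hL hc hne), num_eq hL,
    add_zero' (parts hL hψ hw' hw h0 h1) (∫ _ in (0:ℝ)..L, (_ + _)), ← intervalIntegral.integral_add,
    ← intervalIntegral.integral_const_mul]
  · apply intervalIntegral.integral_mono_on hL.le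
    · apply ContinuousOn.intervalIntegrable_of_Icc hL.le
      fun_prop
    · apply ContinuousOn.intervalIntegrable_of_Icc hL.le
      fun_prop
    · intro y hy
      have := mul_le_mul_of_nonneg_right (hK y hy) (sq_nonneg (ψ y))
      nlinarith [sq_nonneg (derivWithin ψ (Icc 0 L) y - w y * ψ y)]
  · apply ContinuousOn.intervalIntegrable_of_Icc hL.le
    fun_prop
  · apply ContinuousOn.intervalIntegrable_of_Icc hL.le
    fun_prop

lemma muSet_ge {L a l : ℝ} (hL : 0 < L) {b w w' : ℝ → ℝ} (hb : Continuous b) (hw' : Continuous w')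
    (hw : ∀ y, HasDerivAt w (w' y) y) (h0 : w 0 = 0) (h1 : w L = 0) {K : ℝ}
    (hK : ∀ y ∈ Icc 0 L, K ≤ l ^ 2 + l * b y + a + w' y + w y ^ 2) :
    ∃ m ∈ muSet L a b l, K ≤ m := by
  have hwc : Continuous w := continuous_iff_continuousAt.2 fun y => (hw y).continuousAt
  let ψ : ℝ → ℝ := fun y => Real.exp (∫ t in (0:ℝ)..y, w t)
  have hd : ∀ y, HasDerivAt ψ (ψ y * w y) y := fun y =>
    (intervalIntegral.integral_hasDerivAt_right (hwc.intervalIntegrable _ _)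
      (hwc.stronglyMeasurableAtFilter _ _) hwc.continuousAt).exp
  have hψc : Continuous ψ := continuous_iff_continuousAt.2 fun y => (hd y).continuousAt
  have hder : deriv ψ = fun y => ψ y * w y := funext fun y => (hd y).deriv
  have hψ : ContDiff ℝ 1 ψ := by
    rw [contDiff_one_iff_deriv]
    refine ⟨fun y => (hd y).differentiableAt, ?_⟩
    rw [hder]; fun_prop
  have hne : ∃ y ∈ Icc (0 : ℝ) L, ψ y ≠ 0 := ⟨0, ⟨le_rfl, hL.le⟩, (Real.exp_pos _).ne'⟩
  refine ⟨_, ⟨ψ, hψ.contDiffOn, hne, rfl⟩, ?_⟩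
  have hD : ContinuousOn (derivWithin ψ (Icc 0 L)) (Icc 0 L) :=
    hψ.contDiffOn.continuousOn_derivWithin (uniqueDiffOn_Icc hL) le_rfl
  rw [le_div_iff₀ (psi_pos hL hψc.continuousOn hne), num_eq hL,
    add_zero' (parts hL hψ.contDiffOn hw' hw h0 h1) (∫ _ in (0:ℝ)..L, (_ + _)), ← intervalIntegral.integral_add,
    ← intervalIntegral.integral_const_mul]
  · apply intervalIntegral.integral_mono_on hL.le
    · apply ContinuousOn.intervalIntegrable_of_Icc hL.le
      fun_prop
    · apply ContinuousOn.intervalIntegrable_of_Icc hL.le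
      fun_prop
    · intro y hy
      have := mul_le_mul_of_nonneg_right (hK y hy) (sq_nonneg (ψ y))
      rw [(hd y).hasDerivWithinAt.derivWithin (uniqueDiffOn_Icc hL y hy)]
      nlinarith
  · apply ContinuousOn.intervalIntegrable_of_Icc hL.le
    fun_prop
  · apply ContinuousOn.intervalIntegrable_of_Icc hL.le
    fun_prop

lemma muSet_nonempty (L a : ℝ) (hL : 0 < L) (b : ℝ → ℝ) (l : ℝ) : (muSet L a b l).Nonempty :=
  ⟨_, fun _ => 1, contDiffOn_const, ⟨0, ⟨le_rfl, hL.le⟩, one_ne_zero⟩, rfl⟩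

lemma mu_le {L a l : ℝ} (hL : 0 < L) {b w w' : ℝ → ℝ} (hb : Continuous b) (hw' : Continuous w')
    (hw : ∀ y, HasDerivAt w (w' y) y) (h0 : w 0 = 0) (h1 : w L = 0) {K : ℝ}
    (hK : ∀ y ∈ Icc 0 L, l ^ 2 + l * b y + a + w' y + w y ^ 2 ≤ K) :
    mu L a b l ≤ K := 
  csSup_le (muSet_nonempty L a hL b l) (muSet_le hL hb hw' hw h0 h1 hK)

lemma muSet_bdd {L a l : ℝ} (hL : 0 < L) {b : ℝ → ℝ} (hb : Continuous b) :
    BddAbove (muSet L a b l) := by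
  obtain ⟨K, hK⟩ := (isCompact_Icc (a := (0:ℝ)) (b := L)).bddAbove_image
    (f := fun y => l ^ 2 + l * b y + a) (by fun_prop)
  refine ⟨K, muSet_le hL hb (w := fun _ => 0) (w' := fun _ => 0) continuous_const
    (fun y => hasDerivAt_const _ _) rfl rfl ?_⟩
  intro y hy
  have := hK (mem_image_of_mem _ hy)
  simpa using this

lemma le_mu {L a l : ℝ} (hL : 0 < L) {b w w' : ℝ → ℝ} (hb : Continuous b) (hw' : Continuous w')
    (hw : ∀ y, HasDerivAt w (w' y) y) (h0 : w 0 = 0) (h1 : w L = 0) {K : ℝ}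
    (hK : ∀ y ∈ Icc 0 L, K ≤ l ^ 2 + l * b y + a + w' y + w y ^ 2) :
    K ≤ mu L a b l := by
  obtain ⟨m, hm, hKm⟩ := muSet_ge hL hb hw' hw h0 h1 hK
  exact hKm.trans (le_csSup (muSet_bdd hL hb) hm)

/-- perturbation bound -/
lemma mu_lip {L a l : ℝ} (hL : 0 < L) (hl : 0 < l) {b b' : ℝ → ℝ} (hb : Continuous b)
    (hb' : Continuous b') {ε : ℝ} (h : ∀ y ∈ Icc 0 L, |b y - b' y| ≤ ε) :
    mu L a b l ≤ mu L a b' l + l * ε := by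
  apply csSup_le (muSet_nonempty L a hL b l)
  rintro m ⟨ψ, hψ, hne, rfl⟩
  have h2 := le_csSup (muSet_bdd hL hb' (a := a) (l := l)) ⟨ψ, hψ, hne, rfl⟩
  rw [← mu_eq_sSup] at h2
  refine le_trans ?_ (add_le_add_left h2 _)
  have hpos := psi_pos hL hψ.continuousOn hne
  have hD : ContinuousOn (derivWithin ψ (Icc 0 L)) (Icc 0 L) :=
    hψ.continuousOn_derivWithin (uniqueDiffOn_Icc hL) le_rfl
  have hc := hψ.continuousOn
  rw [div_add' _ _ _ hpos.ne', div_le_div_iff_of_pos_right hpos, num_eq hL, num_eq hL,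
    ← intervalIntegral.integral_const_mul, ← intervalIntegral.integral_add]
  · apply intervalIntegral.integral_mono_on hL.le
    · apply ContinuousOn.intervalIntegrable_of_Icc hL.le
      fun_prop
    · apply ContinuousOn.intervalIntegrable_of_Icc hL.le
      fun_prop
    · intro y hy
      have h3 := (abs_le.1 (h y hy)).2
      have := mul_nonneg (mul_nonneg hl.le (sub_nonneg.2 h3)) (sq_nonneg (ψ y))
      nlinarith
  · apply ContinuousOn.intervalIntegrable_of_Icc hL.le
    fun_prop
  · apply ContinuousOn.intervalIntegrable_of_Icc hL.le
    fun_prop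

lemma mu_bound {L a l M : ℝ} (hL : 0 < L) (hl : 0 < l) {b : ℝ → ℝ} (hb : Continuous b)
    (h : ∀ y ∈ Icc 0 L, |b y| ≤ M) :
    l ^ 2 + a - l * M ≤ mu L a b l ∧ mu L a b l ≤ l ^ 2 + a + l * M := by
  constructor
  · apply le_mu hL hb (w := fun _ => 0) (w' := fun _ => 0) continuous_const
      (fun y => hasDerivAt_const _ _) rfl rfl
    intro y hy
    have := (abs_le.1 (h y hy)).1
    nlinarith
  · apply mu_le hL hb (w := fun _ => 0) (w' := fun _ => 0) continuous_const
      (fun y => hasDerivAt_const _ _) rfl rfl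
    intro y hy
    have := (abs_le.1 (h y hy)).2
    nlinarith

lemma amgm {a l : ℝ} (ha : 0 < a) (hl : 0 < l) : 2 * √a ≤ l + a / l := by
  have h := Real.sq_sqrt ha.le
  have : l + a / l - 2 * √a = (l - √a)^2 / l := by
    field_simp
    nlinarith
  have : 0 ≤ (l - √a)^2 / l := by positivity
  linarith

lemma cset_ne (L a : ℝ) (b : ℝ → ℝ) :
    { v : ℝ | ∃ l : ℝ, 0 < l ∧ v = mu L a b l / l }.Nonempty := ⟨_, 1, one_pos, rfl⟩

lemma cset_bdd {L a : ℝ} (hL : 0 < L) (ha : 0 < a) {b : ℝ → ℝ} (hb : Continuous b) :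
    BddBelow { v : ℝ | ∃ l : ℝ, 0 < l ∧ v = mu L a b l / l } := by
  obtain ⟨M, hM⟩ := (isCompact_Icc (a := (0:ℝ)) (b := L)).bddAbove_image
    (f := fun y => |b y|) (by fun_prop)
  refine ⟨2 * √a - M, ?_⟩
  rintro v ⟨l, hl, rfl⟩
  have h1 := (mu_bound (a := a) hL hl hb (M := M) fun y hy => hM (mem_image_of_mem _ hy)).1
  rw [le_div_iff₀ hl]
  have h2 := mul_le_mul_of_nonneg_right (amgm ha hl) hl.le
  rw [add_mul, div_mul_cancel₀ _ hl.ne'] at h2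
  nlinarith

lemma cstar_lip {L a : ℝ} (hL : 0 < L) (ha : 0 < a) {b b' : ℝ → ℝ} (hb : Continuous b)
    (hb' : Continuous b') {ε : ℝ} (h : ∀ y ∈ Icc 0 L, |b y - b' y| ≤ ε) :
    cstar L a b ≤ cstar L a b' + ε := by
  rw [← sub_le_iff_le_add]
  refine le_csInf (cset_ne L a _) ?_
  rintro v ⟨l, hl, rfl⟩
  have h1 : cstar L a b ≤ mu L a b l / l := csInf_le (cset_bdd hL ha hb) ⟨l, hl, rfl⟩
  have h2 := mu_lip (a := a) hL hl hb hb' h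
  have h3 := div_le_div_of_nonneg_right h2 hl.le
  rw [add_div, mul_div_cancel_left₀ _ hl.ne'] at h3
  linarith

lemma cstar_bound {L a M : ℝ} (hL : 0 < L) (ha : 0 < a) {b : ℝ → ℝ} (hb : Continuous b)
    (h : ∀ y ∈ Icc 0 L, |b y| ≤ M) : |cstar L a b - 2 * √a| ≤ M := by
  have hsa := Real.sqrt_pos.2 ha
  have hs := Real.sq_sqrt ha.le
  rw [abs_le]
  constructor
  · have : 2 * √a - M ≤ cstar L a b := by
      refine le_csInf (cset_ne L a _) ?_
      rintro v ⟨l, hl, rfl⟩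
      have h1 := (mu_bound (a := a) hL hl hb h).1
      rw [le_div_iff₀ hl]
      have h2 := mul_le_mul_of_nonneg_right (amgm ha hl) hl.le
      rw [add_mul, div_mul_cancel₀ _ hl.ne'] at h2
      nlinarith
    linarith
  · have h1 : cstar L a b ≤ mu L a b (√a) / √a := csInf_le (cset_bdd hL ha hb) ⟨√a, hsa, rfl⟩
    have h2 := (mu_bound (a := a) hL hsa hb h).2
    have h3 : mu L a b (√a) / √a ≤ 2 * √a + M := by
      rw [div_le_iff₀ hsa]; nlinarith
    linarith


noncomputable def avg (L : ℝ) (b : ℝ → ℝ) : ℝ := (∫ y in (0:ℝ)..L, b y) / L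
noncomputable def WW (L : ℝ) (b : ℝ → ℝ) (y : ℝ) : ℝ := (∫ t in (0:ℝ)..y, b t) - y * avg L b
noncomputable def QQ (L : ℝ) (b : ℝ → ℝ) : ℝ := (∫ y in (0:ℝ)..L, (WW L b y) ^ 2) / L

lemma ftc {f : ℝ → ℝ} (hf : Continuous f) (y : ℝ) :
    HasDerivAt (fun y => ∫ t in (0:ℝ)..y, f t) (f y) y :=
  intervalIntegral.integral_hasDerivAt_right (hf.intervalIntegrable _ _)
      (hf.stronglyMeasurableAtFilter _ _) hf.continuousAt

lemma int_abs_le {L M y : ℝ} {f : ℝ → ℝ} (h : ∀ y ∈ Icc 0 L, |f y| ≤ M) (hy : y ∈ Icc 0 L) :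
    |∫ t in (0:ℝ)..y, f t| ≤ M * y := by
  have := intervalIntegral.norm_integral_le_of_norm_le_const (f := f) (C := M) (a := 0) (b := y) ?_
  · simpa [abs_of_nonneg hy.1] using this
  · intro x hx
    rw [uIoc_of_le hy.1] at hx
    exact h x ⟨hx.1.le, hx.2.trans hy.2⟩

lemma avg_le {L M : ℝ} (hL : 0 < L) {b : ℝ → ℝ} (h : ∀ y ∈ Icc 0 L, |b y| ≤ M) :
    |avg L b| ≤ M := by
  unfold avg
  rw [abs_div, abs_of_pos hL, div_le_iff₀ hL]
  exact int_abs_le h ⟨hL.le, le_rfl⟩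

lemma WW_le {L M y : ℝ} (hL : 0 < L) {b : ℝ → ℝ} (h : ∀ y ∈ Icc 0 L, |b y| ≤ M)
    (hy : y ∈ Icc 0 L) : |WW L b y| ≤ 2 * M * L := by
  have h1 := int_abs_le h hy
  have h2 := avg_le hL h
  have hM : 0 ≤ M := (abs_nonneg _).trans h2
  have h3 : |y * avg L b| ≤ L * M := by
    rw [abs_mul, abs_of_nonneg hy.1]
    exact mul_le_mul hy.2 h2 (abs_nonneg _) hL.le
  have h4 : M * y ≤ M * L := mul_le_mul_of_nonneg_left hy.2 hM
  unfold WW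
  refine (abs_sub _ _).trans ?_
  linarith

lemma WW_sq_le {L M y : ℝ} (hL : 0 < L) {b : ℝ → ℝ} (h : ∀ y ∈ Icc 0 L, |b y| ≤ M)
    (hy : y ∈ Icc 0 L) : |WW L b y ^ 2| ≤ 4 * M ^ 2 * L ^ 2 := by
  have h1 := WW_le hL h hy
  have := pow_le_pow_left₀ (abs_nonneg _) h1 2
  rw [abs_pow]
  linarith

lemma QQ_nonneg {L : ℝ} (hL : 0 < L) (b : ℝ → ℝ) : 0 ≤ QQ L b :=
  div_nonneg (intervalIntegral.integral_nonneg hL.le fun _ _ => sq_nonneg _) hL.le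

lemma QQ_le {L M : ℝ} (hL : 0 < L) {b : ℝ → ℝ} (h : ∀ y ∈ Icc 0 L, |b y| ≤ M) :
    QQ L b ≤ 4 * M ^ 2 * L ^ 2 := by
  refine (le_abs_self _).trans (avg_le hL (b := fun y => WW L b y ^ 2) fun y hy => WW_sq_le hL h hy)

lemma WW_hasDeriv {L : ℝ} {b : ℝ → ℝ} (hb : Continuous b) (y : ℝ) :
    HasDerivAt (WW L b) (b y - avg L b) y := by
  have := (ftc hb y).sub ((hasDerivAt_id y).mul_const (avg L b))
  exact this.congr_deriv (by simp)

lemma WW_cont {L : ℝ} {b : ℝ → ℝ} (hb : Continuous b) : Continuous (WW L b) :=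
  continuous_iff_continuousAt.2 fun y => (WW_hasDeriv hb y).continuousAt

lemma mu_expand {L a l M : ℝ} (hL : 0 < L) (hl : 0 < l) {b : ℝ → ℝ} (hb : Continuous b)
    (h : ∀ y ∈ Icc 0 L, |b y| ≤ M) :
    |mu L a b l - (l ^ 2 + a + l * avg L b + l ^ 2 * QQ L b)| ≤
      16 * l ^ 3 * M ^ 3 * L ^ 4 + 16 * l ^ 4 * M ^ 4 * L ^ 6 := by
  have hM : 0 ≤ M := (abs_nonneg _).trans (avg_le hL h)
  have hWc : Continuous (WW L b) := WW_cont hb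
  let w2 : ℝ → ℝ := fun y => y * QQ L b - ∫ t in (0:ℝ)..y, WW L b t ^ 2
  have hw2d : ∀ y, HasDerivAt w2 (QQ L b - WW L b y ^ 2) y := fun y => by
    have := ((hasDerivAt_id y).mul_const (QQ L b)).sub (ftc (hWc.pow 2) y)
    exact this.congr_deriv (by simp)
  let w : ℝ → ℝ := fun y => - l * WW L b y + l ^ 2 * w2 y
  let w' : ℝ → ℝ := fun y => - l * (b y - avg L b) + l ^ 2 * (QQ L b - WW L b y ^ 2)
  have hw : ∀ y, HasDerivAt w (w' y) y := fun y =>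
    ((WW_hasDeriv hb y).const_mul (-l)).add ((hw2d y).const_mul (l^2))
  have hw' : Continuous w' := by fun_prop
  have h0 : w 0 = 0 := by simp [w, w2, WW]
  have h1 : w L = 0 := by
    have e1 : WW L b L = 0 := by unfold WW avg; field_simp; ring
    have e2 : w2 L = 0 := by simp only [w2]; unfold QQ; field_simp; ring
    simp [w, e1, e2]
  have hw2 : ∀ y ∈ Icc 0 L, |w2 y| ≤ 4 * M ^ 2 * L ^ 3 := by
    intro y hy
    have i1 := int_abs_le (fun y hy => WW_sq_le hL h hy) hy
    have i2 : 0 ≤ ∫ t in (0:ℝ)..y, WW L b t ^ 2 :=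
      intervalIntegral.integral_nonneg hy.1 fun _ _ => sq_nonneg _
    rw [abs_of_nonneg i2] at i1
    have i3 := QQ_nonneg hL b
    have i4 := QQ_le hL h
    have i5 : y * QQ L b ≤ L * (4 * M ^ 2 * L ^ 2) := mul_le_mul hy.2 i4 i3 hL.le
    have i6 : 4 * M ^ 2 * L ^ 2 * y ≤ 4 * M ^ 2 * L ^ 2 * L :=
      mul_le_mul_of_nonneg_left hy.2 (by positivity)
    have i7 := mul_nonneg hy.1 i3
    simp only [w2]
    rw [abs_le]; constructor <;> linarith
  have key : ∀ y ∈ Icc 0 L, |l ^ 2 + l * b y + a + w' y + w y ^ 2 -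
      (l ^ 2 + a + l * avg L b + l ^ 2 * QQ L b)| ≤
      16 * l ^ 3 * M ^ 3 * L ^ 4 + 16 * l ^ 4 * M ^ 4 * L ^ 6 := by
    intro y hy
    have e : l ^ 2 + l * b y + a + w' y + w y ^ 2 -
      (l ^ 2 + a + l * avg L b + l ^ 2 * QQ L b) =
      l ^ 4 * (w2 y * w2 y) - 2 * l ^ 3 * (WW L b y * w2 y) := by
      simp only [w, w']; ring
    rw [e]
    have k1 := hw2 y hy
    have k2 := WW_le hL h hy
    have k3 : |w2 y * w2 y| ≤ (4 * M ^ 2 * L ^ 3) * (4 * M ^ 2 * L ^ 3) := by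
      rw [abs_mul]; exact mul_le_mul k1 k1 (abs_nonneg _) (by positivity)
    have k4 : |WW L b y * w2 y| ≤ (2 * M * L) * (4 * M ^ 2 * L ^ 3) := by
      rw [abs_mul]; exact mul_le_mul k2 k1 (abs_nonneg _) (by positivity)
    calc _ ≤ _ := abs_sub _ _
      _ = l ^ 4 * |w2 y * w2 y| + 2 * l ^ 3 * |WW L b y * w2 y| := by
        rw [abs_mul (l^4), abs_mul (2 * l^3), abs_of_pos (by positivity : 0 < l^4),
          abs_of_pos (by positivity : 0 < 2 * l^3)]
      _ ≤ l ^ 4 * ((4 * M ^ 2 * L ^ 3) * (4 * M ^ 2 * L ^ 3)) +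
          2 * l ^ 3 * ((2 * M * L) * (4 * M ^ 2 * L ^ 3)) := by gcongr
      _ = _ := by ring
  rw [abs_le]
  constructor
  · rw [le_sub_iff_add_le]
    apply le_mu hL hb hw' hw h0 h1
    intro y hy
    have := (abs_le.1 (key y hy)).1
    linarith
  · rw [sub_le_iff_le_add]
    apply mu_le hL hb hw' hw h0 h1
    intro y hy
    have := (abs_le.1 (key y hy)).2
    linarith

lemma det_expand {L a : ℝ} (hL : 0 < L) (ha : 0 < a) : ∃ C > (0:ℝ), ∀ (b : ℝ → ℝ) (M : ℝ),
    Continuous b → (∀ y ∈ Icc 0 L, |b y| ≤ M) →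
    |cstar L a b - 2 * √a - avg L b - √a * QQ L b| ≤ C * M ^ 3 := by
  have hs := Real.sqrt_pos.2 ha
  have hs2 := Real.sq_sqrt ha.le
  set s := √a with hsdef
  let T : ℝ := 2 * s + 2 + 4 * s * L ^ 2
  have hT : 0 < T := by positivity
  let C1 : ℝ := 16 * T ^ 2 * L ^ 4 + 16 * T ^ 3 * L ^ 6
  have hC1 : 0 < C1 := by positivity
  have hsT : s ≤ T := by
    have : 0 ≤ 4 * s * L^2 := by positivity
    simp only [T]; linarith
  refine ⟨2 + 4 * s * L ^ 2 + C1 + 4 * T * L ^ 4, by positivity, ?_⟩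
  intro b M hb h
  have ha1 := abs_le.1 (avg_le hL h)
  have hQ0 := QQ_nonneg hL b
  have hQ1 := QQ_le hL h
  have hM : 0 ≤ M := (abs_nonneg _).trans (avg_le hL h)
  rcases le_total 1 M with hM1 | hM1
  · have hc := abs_le.1 (cstar_bound hL ha hb h)
    rw [← hsdef] at hc
    have hM3 : M ≤ M ^ 3 := le_self_pow₀ hM1 (by norm_num)
    have hM23 : M ^ 2 ≤ M ^ 3 := pow_le_pow_right₀ hM1 (by norm_num)
    have hsQ : s * QQ L b ≤ 4 * s * L ^ 2 * M ^ 3 := by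
      calc s * QQ L b ≤ s * (4 * M ^ 2 * L ^ 2) := by gcongr
        _ ≤ s * (4 * M ^ 3 * L ^ 2) := by gcongr
        _ = _ := by ring
    have hsQ0 : 0 ≤ s * QQ L b := by positivity
    have e1 : 0 ≤ C1 * M ^ 3 := by positivity
    have e2 : 0 ≤ 4 * T * L ^ 4 * M ^ 3 := by positivity
    rw [abs_le]
    constructor <;> linarith
  · have hQ2 : QQ L b ≤ 4 * L ^ 2 := by
      have : M ^ 2 ≤ 1 := pow_le_one₀ hM hM1
      nlinarith [sq_nonneg L]
    have hM4 : M ^ 4 ≤ M ^ 3 := pow_le_pow_of_le_one hM hM1 (by norm_num)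
    have herr : ∀ l : ℝ, 0 < l → l ≤ T →
        16 * l ^ 3 * M ^ 3 * L ^ 4 + 16 * l ^ 4 * M ^ 4 * L ^ 6 ≤ l * (C1 * M ^ 3) := by
      intro l hl hlT
      calc 16 * l ^ 3 * M ^ 3 * L ^ 4 + 16 * l ^ 4 * M ^ 4 * L ^ 6
          = l * (16 * l ^ 2 * L ^ 4 * M ^ 3 + 16 * l ^ 3 * L ^ 6 * M ^ 4) := by ring
        _ ≤ l * (16 * T ^ 2 * L ^ 4 * M ^ 3 + 16 * T ^ 3 * L ^ 6 * M ^ 3) := by gcongr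
        _ = _ := by simp only [C1]; ring
    have e0 : 0 ≤ (2 + 4 * s * L ^ 2) * M ^ 3 := by positivity
    have e1 : 0 ≤ C1 * M ^ 3 := by positivity
    have e2 : 0 ≤ 4 * T * L ^ 4 * M ^ 3 := by positivity
    rw [abs_le]
    constructor
    · have : 2 * s + avg L b + s * QQ L b - C1 * M ^ 3 - 4 * T * L ^ 4 * M ^ 3 ≤ cstar L a b := by
        refine le_csInf (cset_ne L a _) ?_
        rintro v ⟨l, hl, rfl⟩
        rw [le_div_iff₀ hl]
        rcases le_total l T with hlT | hlT
        · have h1 := (abs_le.1 (mu_expand (a := a) hL hl hb h)).1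
          have h2 := herr l hl hlT
          have h3 : l * QQ L b ^ 2 / 4 ≤ 4 * T * L ^ 4 * M ^ 3 := by
            calc l * QQ L b ^ 2 / 4 ≤ T * (4 * M ^ 2 * L ^ 2) ^ 2 / 4 := by gcongr
              _ = 4 * T * L ^ 4 * M ^ 4 := by ring
              _ ≤ _ := by gcongr
          have h4 := mul_le_mul_of_nonneg_left h3 hl.le
          have h5 := sq_nonneg (s - (1 + QQ L b / 2) * l)
          nlinarith
        · have h1 := (mu_bound (a := a) hL hl hb h).1
          have h2 : 2 * s + avg L b + s * QQ L b - C1 * M ^ 3 - 4 * T * L ^ 4 * M ^ 3 ≤ l - M := by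
            have : s * QQ L b ≤ s * (4 * L ^ 2) := by gcongr
            simp only [T] at hlT e2 ⊢
            linarith
          have := mul_le_mul_of_nonneg_right h2 hl.le
          nlinarith
      linarith
    · have h1 : cstar L a b ≤ mu L a b s / s := csInf_le (cset_bdd hL ha hb) ⟨s, hs, rfl⟩
      have h2 := (abs_le.1 (mu_expand (a := a) hL hs hb h)).2
      have h3 := herr s hs hsT
      have h4 : mu L a b s / s ≤ 2 * s + avg L b + s * QQ L b + C1 * M ^ 3 := by
        rw [div_le_iff₀ hs]; nlinarith
      linarith


noncomputable def KK (A s t : ℝ) : ℝ :=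
  (2 * s - (1 - exp (-A * s)) / A - (exp (-A * (t - s)) - exp (-A * t)) / A) / A

lemma inner_int {A u t : ℝ} (hA : 0 < A) (hu : 0 ≤ u) (hut : u ≤ t) :
    ∫ v in (0:ℝ)..t, exp (-A * |u - v|) = (2 - exp (-A * u) - exp (-A * (t - u))) / A := by
  have hc : Continuous fun v => exp (-A * |u - v|) := by fun_prop
  rw [← intervalIntegral.integral_add_adjacent_intervals (hc.intervalIntegrable 0 u)
    (hc.intervalIntegrable u t)]
  have e1 : ∫ v in (0:ℝ)..u, exp (-A * |u - v|) = ∫ v in (0:ℝ)..u, exp (-A * (u - v)) := by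
    apply intervalIntegral.integral_congr
    intro v hv
    rw [uIcc_of_le hu] at hv
    simp only [abs_of_nonneg (sub_nonneg.2 hv.2)]
  have e2 : ∫ v in u..t, exp (-A * |u - v|) = ∫ v in u..t, exp (-A * (v - u)) := by
    apply intervalIntegral.integral_congr
    intro v hv
    rw [uIcc_of_le hut] at hv
    simp only [abs_sub_comm u v, abs_of_nonneg (sub_nonneg.2 hv.1)]
  rw [e1, e2, intervalIntegral.integral_eq_sub_of_hasDerivAt (f := fun v => exp (-A * (u - v)) / A),
    intervalIntegral.integral_eq_sub_of_hasDerivAt (f := fun v => - exp (-A * (v - u)) / A)]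
  · simp; ring
  · intro x _
    have := ((((hasDerivAt_id x).sub_const u).const_mul (-A)).exp.neg.div_const A)
    refine this.congr_deriv ?_
    simp; field_simp
  · apply Continuous.intervalIntegrable; fun_prop
  · intro x _
    have := ((((hasDerivAt_id x).const_sub u).const_mul (-A)).exp.div_const A)
    refine this.congr_deriv ?_
    simp; field_simp
  · apply Continuous.intervalIntegrable; fun_prop

lemma dbl_int {A s t ρ : ℝ} (hA : 0 < A) (hs : 0 ≤ s) (hst : s ≤ t) :
    ∫ u in (0:ℝ)..s, ∫ v in (0:ℝ)..t, ρ * exp (-A * |u - v|) = ρ * KK A s t := by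
  have e1 : ∫ u in (0:ℝ)..s, ∫ v in (0:ℝ)..t, ρ * exp (-A * |u - v|) =
      ∫ u in (0:ℝ)..s, ρ * ((2 - exp (-A * u) - exp (-A * (t - u))) / A) := by
    apply intervalIntegral.integral_congr
    intro u hu
    rw [uIcc_of_le hs] at hu
    simp only [intervalIntegral.integral_const_mul]
    rw [inner_int hA hu.1 (hu.2.trans hst)]
  rw [e1, intervalIntegral.integral_const_mul,
    intervalIntegral.integral_eq_sub_of_hasDerivAt
      (f := fun u => (2 * u + exp (-A * u) / A - exp (-A * (t - u)) / A) / A)]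
  · unfold KK; simp; left; ring
  · intro x _
    have := ((((hasDerivAt_id x).const_mul 2).add
      (((hasDerivAt_id x).const_mul (-A)).exp.div_const A)).sub
      ((((hasDerivAt_id x).const_sub t).const_mul (-A)).exp.div_const A)).div_const A
    refine this.congr_deriv ?_
    simp; field_simp; ring
  · apply Continuous.intervalIntegrable; fun_prop

lemma final_int {A L : ℝ} (hA : 0 < A) (hL : 0 < L) :
    (∫ y in (0:ℝ)..L, (KK A y y - 2 * (y / L) * KK A y L + (y / L) ^ 2 * KK A L L)) / L =
    (Real.exp (-A * L) * (4 / (L ^ 2 * A ^ 4) - 1 / (3 * A ^ 2)) +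
      L / (3 * A) - 4 / (L ^ 2 * A ^ 4) - 5 / (3 * A ^ 2) + 4 / (L * A ^ 3)) := by
  rw [intervalIntegral.integral_eq_sub_of_hasDerivAt
      (f := fun y => (y ^ 2 - 2 * y / A - 2 * exp (-A * y) / A ^ 2) / A
        - 2 / L * ((2 * y ^ 3 / 3 - y ^ 2 / (2 * A) - (y / A + 1 / A ^ 2) * exp (-A * y) / A
            - (y / A - 1 / A ^ 2) * exp (-A * (L - y)) / A + exp (-A * L) * y ^ 2 / (2 * A)) / A)
        + y ^ 3 / (3 * L ^ 2) * KK A L L)]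
  · unfold KK
    simp
    field_simp
    ring
  · intro y _
    have i := hasDerivAt_id y
    have e1 := (i.const_mul (-A)).exp
    have e2 := ((i.const_sub L).const_mul (-A)).exp
    have t1 := (((i.pow 2).sub ((i.const_mul 2).div_const A)).sub
      ((e1.const_mul 2).div_const (A^2))).div_const A
    have t2 := ((((((((i.pow 3).const_mul 2).div_const 3).sub ((i.pow 2).div_const (2 * A))).sub
      ((((i.div_const A).add_const (1 / A^2)).mul e1).div_const A)).sub
      ((((i.div_const A).sub_const (1 / A^2)).mul e2).div_const A)).add
      (((i.pow 2).const_mul (exp (-A * L))).div_const (2 * A))).div_const A).const_mul (2 / L)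
    have t3 := ((i.pow 3).div_const (3 * L^2)).mul_const (KK A L L)
    have := (t1.sub t2).add t3
    refine this.congr_deriv ?_
    unfold KK
    simp
    field_simp
    ring
  · apply Continuous.intervalIntegrable
    unfold KK
    fun_prop


lemma cstar_meas {Ω : Type*} [MeasurableSpace Ω] (P : Measure Ω)
    {L a : ℝ} (hL : 0 < L) (ha : 0 < a) (b : Ω → ℝ → ℝ)
    (hmeas : Measurable (Function.uncurry b))
    (hpath : ∀ᵐ ω ∂P, ContinuousOn (b ω) (Icc 0 L)) :
    AEStronglyMeasurable (fun ω => cstar L a (b ω)) P := by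
  classical
  let ext : C(unitInterval, ℝ) → ℝ → ℝ := fun f y => f (projIcc 0 1 zero_le_one (y / L))
  have hext : ∀ f, Continuous (ext f) := fun f =>
    f.continuous.comp (continuous_projIcc.comp (continuous_id.div_const L))
  have hΦ : Continuous fun f : C(unitInterval, ℝ) => cstar L a (ext f) := by
    have : LipschitzWith 1 fun f : C(unitInterval, ℝ) => cstar L a (ext f) := by
      apply LipschitzWith.of_le_add
      intro f g
      apply cstar_lip hL ha (hext f) (hext g)
      intro y _
      rw [← Real.dist_eq]
      exact ContinuousMap.dist_apply_le_dist _
    exact this.continuous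
  have hcont : ∀ ω, ContinuousOn (b ω) (Icc 0 L) →
      Continuous fun x : unitInterval => b ω (L * x) := by
    intro ω h
    apply h.comp_continuous (by fun_prop)
    intro x
    exact ⟨mul_nonneg hL.le x.2.1, mul_le_of_le_one_right hL.le x.2.2⟩
  let F : Ω → C(unitInterval, ℝ) := fun ω =>
    if h : ContinuousOn (b ω) (Icc 0 L) then ⟨_, hcont ω h⟩ else 0
  let Fn : ℕ → Ω → C(unitInterval, ℝ) := fun n ω =>
    ∑ k : Fin (n + 1), b ω (L * (bernstein.z k : unitInterval)) • bernstein n k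
  have hFn : ∀ n, StronglyMeasurable (Fn n) := by
    intro n
    apply Finset.stronglyMeasurable_fun_sum
    intro k _
    apply StronglyMeasurable.smul_const
    exact (hmeas.comp (measurable_id.prodMk measurable_const)).stronglyMeasurable
  have hF : AEStronglyMeasurable F P := by
    apply aestronglyMeasurable_of_tendsto_ae Filter.atTop (f := Fn)
      (fun n => (hFn n).aestronglyMeasurable)
    filter_upwards [hpath] with ω h
    have := bernsteinApproximation_uniform (F ω)
    refine this.congr fun n => ?_
    ext x
    rw [bernsteinApproximation.apply]
    simp [Fn, F, h, mul_comm]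
  refine (hΦ.comp_aestronglyMeasurable hF).congr ?_
  filter_upwards [hpath] with ω h
  apply cstar_congr hL
  intro y hy
  have : y / L ∈ Icc (0:ℝ) 1 := ⟨div_nonneg hy.1 hL.le, (div_le_one hL).2 hy.2⟩
  simp only [ext, F, dif_pos h]
  rw [projIcc_of_mem _ this]
  simp only [ContinuousMap.coe_mk]
  congr 1
  field_simp

lemma prod_int {Ω γ : Type*} [MeasurableSpace Ω] [MeasurableSpace γ] (P : Measure Ω)
    [IsProbabilityMeasure P] (κ : Measure γ) [IsFiniteMeasure κ] {g : Ω → γ → ℝ}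
    (hg : Measurable (Function.uncurry g)) {G : Ω → ℝ} (hG : Integrable G P) {S : Set γ}
    (hS : ∀ᵐ z ∂κ, z ∈ S) (hb : ∀ᵐ ω ∂P, ∀ z ∈ S, |g ω z| ≤ G ω) :
    Integrable (Function.uncurry g) (P.prod κ) := by
  refine (hG.comp_fst κ).mono' hg.aestronglyMeasurable ?_
  have h1 := Measure.quasiMeasurePreserving_fst (μ := P) (ν := κ) |>.ae hb
  have h2 := Measure.quasiMeasurePreserving_snd (μ := P) (ν := κ) |>.ae hS
  filter_upwards [h1, h2] with p hp1 hp2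
  exact hp1 _ hp2

lemma B_meas {Ω : Type*} [MeasurableSpace Ω] {b : Ω → ℝ → ℝ}
    (hmeas : Measurable (Function.uncurry b)) :
    Measurable (Function.uncurry fun ω y => ∫ t in (0:ℝ)..y, b ω t) := by
  have hm : Measurable fun q : (Ω × ℝ) × ℝ => b q.1.1 q.2 :=
    hmeas.comp (measurable_fst.fst.prodMk measurable_snd)
  have e : (Function.uncurry fun ω y => ∫ t in (0:ℝ)..y, b ω t) = fun p : Ω × ℝ =>
      (∫ t, indicator {q : (Ω × ℝ) × ℝ | 0 < q.2 ∧ q.2 ≤ q.1.2} (fun q => b q.1.1 q.2) (p, t)) -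
      ∫ t, indicator {q : (Ω × ℝ) × ℝ | q.1.2 < q.2 ∧ q.2 ≤ 0} (fun q => b q.1.1 q.2) (p, t) := by
    ext ⟨ω, y⟩
    simp only [Function.uncurry, intervalIntegral]
    rw [← MeasureTheory.integral_indicator measurableSet_Ioc, ← MeasureTheory.integral_indicator measurableSet_Ioc]
    rfl
  rw [e]
  apply Measurable.sub
  · apply StronglyMeasurable.measurable
    apply StronglyMeasurable.integral_prod_right'
    apply Measurable.stronglyMeasurable
    apply hm.indicator
    exact (measurableSet_lt measurable_const measurable_snd).inter
      (measurableSet_le measurable_snd measurable_fst.snd)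
  · apply StronglyMeasurable.measurable
    apply StronglyMeasurable.integral_prod_right'
    apply Measurable.stronglyMeasurable
    apply hm.indicator
    exact (measurableSet_lt measurable_fst.snd measurable_snd).inter
      (measurableSet_le measurable_snd measurable_const)

section
variable {Ω : Type*} [MeasurableSpace Ω] (P : Measure Ω) [IsProbabilityMeasure P]
    {L A ρ : ℝ} {b : Ω → ℝ → ℝ} {N : Ω → ℝ}

lemma B_mean (hL : 0 < L) (hmeas : Measurable (Function.uncurry b))
    (hN : ∀ᵐ ω ∂P, ∀ y ∈ Icc 0 L, |b ω y| ≤ N ω) (hNi : Integrable N P)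
    (hmean : ∀ y ∈ Icc (0 : ℝ) L, (∫ ω, b ω y ∂P) = 0) : ∫ ω, avg L (b ω) ∂P = 0 := by
  unfold avg
  rw [MeasureTheory.integral_div]
  simp only [intervalIntegral.integral_of_le hL.le]
  rw [MeasureTheory.integral_integral_swap]
  · rw [setIntegral_congr_fun (g := fun _ => (0:ℝ)) measurableSet_Ioc]
    · simp
    · intro y hy
      exact hmean y (Ioc_subset_Icc_self hy)
  · exact prod_int P _ hmeas hNi (S := Icc 0 L)
      ((ae_restrict_mem measurableSet_Ioc).mono fun x hx => Ioc_subset_Icc_self hx) hN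

lemma B_cov (hA : 0 < A) (hmeas : Measurable (Function.uncurry b))
    (hN : ∀ᵐ ω ∂P, ∀ y ∈ Icc 0 L, |b ω y| ≤ N ω) (hNi : Integrable (fun ω => N ω ^ 2) P)
    (hcov : ∀ s ∈ Icc (0 : ℝ) L, ∀ y ∈ Icc (0 : ℝ) L,
      (∫ ω, b ω s * b ω y ∂P) = ρ * Real.exp (-A * |s - y|)) {s t : ℝ} (hs : 0 ≤ s) (hst : s ≤ t)
    (ht : t ≤ L) :
    ∫ ω, (∫ u in (0:ℝ)..s, b ω u) * (∫ v in (0:ℝ)..t, b ω v) ∂P = ρ * KK A s t := by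
  rw [← dbl_int hA hs hst]
  have h0t := hs.trans hst
  simp only [intervalIntegral.integral_of_le hs, intervalIntegral.integral_of_le h0t]
  have hS : ∀ᵐ z ∂((volume.restrict (Ioc 0 s)).prod (volume.restrict (Ioc 0 t))),
      z ∈ (Ioc 0 s ×ˢ Ioc 0 t : Set (ℝ × ℝ)) := by
    rw [Measure.prod_restrict]
    exact ae_restrict_mem (measurableSet_Ioc.prod measurableSet_Ioc)
  have hsub : ∀ z ∈ (Ioc 0 s ×ˢ Ioc 0 t : Set (ℝ × ℝ)), z.1 ∈ Icc 0 L ∧ z.2 ∈ Icc 0 L :=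
    fun z hz => ⟨⟨hz.1.1.le, hz.1.2.trans (hst.trans ht)⟩, ⟨hz.2.1.le, hz.2.2.trans ht⟩⟩
  simp only [← MeasureTheory.integral_prod_mul]
  rw [MeasureTheory.integral_integral_swap]
  · rw [MeasureTheory.integral_congr_ae (g := fun z => ρ * Real.exp (-A * |z.1 - z.2|))]
    · rw [MeasureTheory.integral_prod]
      rw [Measure.prod_restrict]
      have hc : Continuous fun z : ℝ × ℝ => ρ * Real.exp (-A * |z.1 - z.2|) := by fun_prop
      exact (hc.continuousOn.integrableOn_compact
        ((isCompact_Icc (a := 0) (b := s)).prod (isCompact_Icc (a := 0) (b := t)))).mono_set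
        (prod_mono Ioc_subset_Icc_self Ioc_subset_Icc_self)
    · filter_upwards [hS] with z hz
      exact hcov _ (hsub z hz).1 _ (hsub z hz).2
  · refine prod_int P _ ?_ hNi hS ?_
    · exact (hmeas.comp (measurable_fst.prodMk measurable_snd.fst)).mul
        (hmeas.comp (measurable_fst.prodMk measurable_snd.snd))
    · filter_upwards [hN] with ω h z hz
      have h1 := h _ (hsub z hz).1
      have h2 := h _ (hsub z hz).2
      rw [abs_mul, sq]
      exact mul_le_mul h1 h2 (abs_nonneg _) ((abs_nonneg _).trans h1)

lemma BB_int (hmeas : Measurable (Function.uncurry b))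
    (hN : ∀ᵐ ω ∂P, ∀ y ∈ Icc 0 L, |b ω y| ≤ N ω) (hNi : Integrable (fun ω => N ω ^ 2) P)
    {s t : ℝ} (hs : s ∈ Icc 0 L) (ht : t ∈ Icc 0 L) :
    Integrable (fun ω => (∫ u in (0:ℝ)..s, b ω u) * (∫ v in (0:ℝ)..t, b ω v)) P := by
  have hB := B_meas hmeas
  refine (hNi.mul_const (s * t)).mono' ?_ ?_
  · exact ((hB.comp (measurable_id.prodMk (measurable_const (a := s)))).mul
      (hB.comp (measurable_id.prodMk (measurable_const (a := t))))).aestronglyMeasurable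
  · filter_upwards [hN] with ω h
    rw [Real.norm_eq_abs, abs_mul]
    have h1 := int_abs_le h hs
    have h2 := int_abs_le h ht
    calc _ ≤ (N ω * s) * (N ω * t) :=
          mul_le_mul h1 h2 (abs_nonneg _) ((abs_nonneg _).trans h1)
      _ = _ := by ring

lemma WW_meas (hmeas : Measurable (Function.uncurry b)) :
    Measurable (Function.uncurry fun ω y => WW L (b ω) y) := by
  have hB := B_meas hmeas
  have h2 : Measurable fun p : Ω × ℝ => avg L (b p.1) :=
    (hB.comp (measurable_fst.prodMk (measurable_const (a := L)))).div_const L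
  exact hB.sub (measurable_snd.mul h2)

lemma WW_prod_int (hL : 0 < L) (hmeas : Measurable (Function.uncurry b))
    (hN : ∀ᵐ ω ∂P, ∀ y ∈ Icc 0 L, |b ω y| ≤ N ω) (hNi : Integrable (fun ω => N ω ^ 2) P) :
    Integrable (Function.uncurry fun ω y => WW L (b ω) y ^ 2)
      (P.prod (volume.restrict (Ioc 0 L))) := by
  refine prod_int P _ ((WW_meas hmeas).pow_const 2) ((hNi.const_mul 4).mul_const (L ^ 2))
    (S := Icc 0 L)
    ((ae_restrict_mem measurableSet_Ioc).mono fun x hx => Ioc_subset_Icc_self hx) ?_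
  filter_upwards [hN] with ω h y hy
  exact WW_sq_le hL h hy

lemma QQ_integrable (hL : 0 < L) (hmeas : Measurable (Function.uncurry b))
    (hN : ∀ᵐ ω ∂P, ∀ y ∈ Icc 0 L, |b ω y| ≤ N ω) (hNi : Integrable (fun ω => N ω ^ 2) P) :
    Integrable (fun ω => QQ L (b ω)) P := by
  unfold QQ
  simp only [intervalIntegral.integral_of_le hL.le]
  exact (WW_prod_int P hL hmeas hN hNi).integral_prod_left.div_const L

lemma QQ_mean (hL : 0 < L) (hA : 0 < A) (hmeas : Measurable (Function.uncurry b))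
    (hN : ∀ᵐ ω ∂P, ∀ y ∈ Icc 0 L, |b ω y| ≤ N ω) (hNi : Integrable (fun ω => N ω ^ 2) P)
    (hcov : ∀ s ∈ Icc (0 : ℝ) L, ∀ y ∈ Icc (0 : ℝ) L,
      (∫ ω, b ω s * b ω y ∂P) = ρ * Real.exp (-A * |s - y|)) :
    ∫ ω, QQ L (b ω) ∂P =
    ρ * (Real.exp (-A * L) * (4 / (L ^ 2 * A ^ 4) - 1 / (3 * A ^ 2)) +
      L / (3 * A) - 4 / (L ^ 2 * A ^ 4) - 5 / (3 * A ^ 2) + 4 / (L * A ^ 3)) := by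
  rw [← final_int hA hL, mul_div_assoc', ← intervalIntegral.integral_const_mul]
  unfold QQ
  rw [MeasureTheory.integral_div]
  simp only [intervalIntegral.integral_of_le hL.le]
  rw [MeasureTheory.integral_integral_swap (WW_prod_int P hL hmeas hN hNi)]
  congr 1
  apply setIntegral_congr_fun measurableSet_Ioc
  intro y hy
  have hy' : y ∈ Icc 0 L := Ioc_subset_Icc_self hy
  have hLL : L ∈ Icc 0 L := ⟨hL.le, le_rfl⟩
  have c1 := B_cov P hA hmeas hN hNi hcov hy'.1 le_rfl hy'.2
  have c2 := B_cov P hA hmeas hN hNi hcov hy'.1 hy'.2 le_rfl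
  have c3 := B_cov P hA hmeas hN hNi hcov hL.le le_rfl le_rfl
  have i1 := BB_int P hmeas hN hNi hy' hy'
  have i2 := BB_int P hmeas hN hNi hy' hLL
  have i3 := BB_int P hmeas hN hNi hLL hLL
  have i4 : Integrable (fun ω => (∫ u in (0:ℝ)..y, b ω u) * (∫ v in (0:ℝ)..y, b ω v) -
      2 * (y / L) * ((∫ u in (0:ℝ)..y, b ω u) * (∫ v in (0:ℝ)..L, b ω v))) P :=
    i1.sub (i2.const_mul _)
  have e : ∀ ω, WW L (b ω) y ^ 2 =
      ((∫ u in (0:ℝ)..y, b ω u) * (∫ v in (0:ℝ)..y, b ω v) -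
      2 * (y / L) * ((∫ u in (0:ℝ)..y, b ω u) * (∫ v in (0:ℝ)..L, b ω v))) +
      (y / L) ^ 2 * ((∫ u in (0:ℝ)..L, b ω u) * (∫ v in (0:ℝ)..L, b ω v)) := by
    intro ω
    unfold WW avg
    ring
  simp only [e]
  rw [MeasureTheory.integral_add i4 (i3.const_mul _), MeasureTheory.integral_sub i1 (i2.const_mul _),
    MeasureTheory.integral_const_mul, MeasureTheory.integral_const_mul, c1, c2, c3]
  ring

end


lemma QQ_scale {L δ : ℝ} (hL : 0 < L) {b b' : ℝ → ℝ} (h : ∀ y ∈ Icc 0 L, b' y = δ * b y) :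
    avg L b' = δ * avg L b ∧ QQ L b' = δ ^ 2 * QQ L b := by
  have hI : ∀ y ∈ Icc 0 L, (∫ t in (0:ℝ)..y, b' t) = δ * ∫ t in (0:ℝ)..y, b t := by
    intro y hy
    rw [← intervalIntegral.integral_const_mul]
    apply intervalIntegral.integral_congr
    intro t ht
    rw [uIcc_of_le hy.1] at ht
    exact h t ⟨ht.1, ht.2.trans hy.2⟩
  have ha : avg L b' = δ * avg L b := by
    unfold avg
    rw [hI L ⟨hL.le, le_rfl⟩]; ring
  refine ⟨ha, ?_⟩
  unfold QQ
  rw [← mul_div_assoc, ← intervalIntegral.integral_const_mul]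
  congr 1
  apply intervalIntegral.integral_congr
  intro y hy
  rw [uIcc_of_le hL.le] at hy
  simp only [WW, hI y hy, ha]
  ring

/-- explicit averaged speed formula for shears with
Ornstein–Uhlenbeck covariance `ρ e^{−A|s−y|}`: with
`enh := ρ ( e^{−AL}(4/(L²A⁴) − 1/(3A²)) + L/(3A) − 4/(L²A⁴) − 5/(3A²) + 4/(LA³) )`,
`| E[c*(δ b)] − c₀ − (c₀ δ²/2)·enh | ≤ C δ³` for all small `δ > 0`. -/
theorem stmt14 {Ω : Type*} [MeasurableSpace Ω] (P : Measure Ω) [IsProbabilityMeasure P]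
    (L a A ρ : ℝ) (hL : 0 < L) (ha : 0 < a) (hA : 0 < A) (hρ : 0 < ρ)
    (b : Ω → ℝ → ℝ)
    (hmeas : Measurable (Function.uncurry b))
    (hpath : ∀ᵐ ω ∂P, ContinuousOn (b ω) (Icc 0 L))
    (hmean : ∀ y ∈ Icc (0 : ℝ) L, (∫ ω, b ω y ∂P) = 0)
    (hcov : ∀ s ∈ Icc (0 : ℝ) L, ∀ y ∈ Icc (0 : ℝ) L,
      (∫ ω, b ω s * b ω y ∂P) = ρ * Real.exp (-A * |s - y|))
    (hmom : Integrable (fun ω => (supNorm L (b ω)) ^ 6) P)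
    (enh : ℝ)
    (henh : enh = ρ * (Real.exp (-A * L) * (4 / (L ^ 2 * A ^ 4) - 1 / (3 * A ^ 2)) +
      L / (3 * A) - 4 / (L ^ 2 * A ^ 4) - 5 / (3 * A ^ 2) + 4 / (L * A ^ 3))) :
    ∃ C > (0 : ℝ), ∃ δ₀ > (0 : ℝ), ∀ δ : ℝ, 0 < δ → δ < δ₀ →
      |(∫ ω, cstar L a (fun y => δ * b ω y) ∂P) - 2 * Real.sqrt a -
          (2 * Real.sqrt a * δ ^ 2 / 2) * enh| ≤ C * δ ^ 3 := by
  set N : Ω → ℝ := fun ω => supNorm L (b ω) with hNdef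
  have hN0 : ∀ ω, 0 ≤ N ω := fun ω => by
    apply Real.sSup_nonneg
    rintro _ ⟨y, _, rfl⟩
    exact abs_nonneg _
  have hN : ∀ᵐ ω ∂P, ∀ y ∈ Icc 0 L, |b ω y| ≤ N ω := by
    filter_upwards [hpath] with ω h y hy
    exact le_csSup (isCompact_Icc.bddAbove_image h.abs) (mem_image_of_mem _ hy)
  have hNm : AEStronglyMeasurable N P := by
    have h1 := (hmom.aestronglyMeasurable.aemeasurable.pow_const (1 / 6 : ℝ)).aestronglyMeasurable
    refine h1.congr (Filter.Eventually.of_forall fun ω => ?_)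
    have h2 := Real.pow_rpow_inv_natCast (hN0 ω) (n := 6) (by norm_num)
    simpa using h2
  have hNk : ∀ k : ℕ, k ≤ 6 → Integrable (fun ω => N ω ^ k) P := by
    intro k hk
    refine ((integrable_const (1:ℝ)).add hmom).mono' (hNm.pow k) ?_
    refine Filter.Eventually.of_forall fun ω => ?_
    have h0 := hN0 ω
    rw [Real.norm_eq_abs, abs_of_nonneg (pow_nonneg h0 k)]
    change N ω ^ k ≤ 1 + N ω ^ 6
    rcases le_total 1 (N ω) with h1 | h1
    · have := pow_le_pow_right₀ h1 hk
      linarith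
    · have := pow_le_one₀ h0 h1 (n := k)
      have : 0 ≤ N ω ^ 6 := by positivity
      linarith
  have hN1 : Integrable N P := by simpa using hNk 1 (by norm_num)
  have hN2 := hNk 2 (by norm_num)
  have hN3 := hNk 3 (by norm_num)
  have hmean' := B_mean P hL hmeas hN hN1 hmean
  have hQ := QQ_mean P hL hA hmeas hN hN2 hcov
  rw [← henh] at hQ
  have hQi := QQ_integrable P hL hmeas hN hN2
  have hai : Integrable (fun ω => avg L (b ω)) P := by
    refine hN1.mono' ?_ ?_
    · exact (((B_meas hmeas).comp (measurable_id.prodMk (measurable_const (a := L)))).div_const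
        L).aestronglyMeasurable
    · filter_upwards [hN] with ω h
      exact avg_le hL h
  obtain ⟨C, hC, hdet⟩ := det_expand hL ha
  have hI3 : 0 ≤ ∫ ω, N ω ^ 3 ∂P := integral_nonneg fun ω => pow_nonneg (hN0 ω) 3
  refine ⟨C * (∫ ω, N ω ^ 3 ∂P) + 1, by positivity, 1, one_pos, ?_⟩
  intro δ hδ _
  have hext : ∀ᵐ ω ∂P, ∃ b' : ℝ → ℝ, Continuous b' ∧ (∀ y ∈ Icc 0 L, b' y = δ * b ω y) ∧
      (∀ y ∈ Icc 0 L, |b' y| ≤ δ * N ω) := by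
    filter_upwards [hpath, hN] with ω h1 h2
    have e : ∀ y ∈ Icc 0 L, IccExtend hL.le (Set.domRestrict (Icc 0 L) fun y => δ * b ω y) y
        = δ * b ω y := by
      intro y hy
      rw [IccExtend_of_mem _ _ hy]; rfl
    refine ⟨IccExtend hL.le (Set.domRestrict (Icc 0 L) fun y => δ * b ω y), ?_, e, ?_⟩
    · apply Continuous.Icc_extend'
      exact (continuousOn_const.mul h1).domRestrict
    · intro y hy
      rw [e y hy, abs_mul, abs_of_pos hδ]
      exact mul_le_mul_of_nonneg_left (h2 y hy) hδ.le
  have hcm : AEStronglyMeasurable (fun ω => cstar L a (fun y => δ * b ω y)) P := by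
    apply cstar_meas P hL ha (fun ω y => δ * b ω y) (hmeas.const_mul δ)
    filter_upwards [hpath] with ω h
    exact continuousOn_const.mul h
  have hci : Integrable (fun ω => cstar L a (fun y => δ * b ω y)) P := by
    refine ((integrable_const (2 * √a)).add (hN1.const_mul δ)).mono' hcm ?_
    filter_upwards [hext] with ω ⟨b', hb', he, hM⟩
    have h1 := cstar_bound hL ha hb' hM
    rw [cstar_congr hL he] at h1
    have h2 := abs_le.1 h1
    have h3 := Real.sqrt_nonneg a
    change |_| ≤ 2 * √a + δ * N ω
    rw [abs_le]
    constructor <;> linarith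
  have hbd : ∀ᵐ ω ∂P, |cstar L a (fun y => δ * b ω y) - 2 * √a - δ * avg L (b ω) -
      √a * (δ ^ 2 * QQ L (b ω))| ≤ C * δ ^ 3 * N ω ^ 3 := by
    filter_upwards [hext] with ω ⟨b', hb', he, hM⟩
    have h1 := hdet b' _ hb' hM
    rw [cstar_congr hL he, (QQ_scale hL he).1, (QQ_scale hL he).2] at h1
    refine h1.trans (le_of_eq ?_)
    ring
  have i1 : Integrable (fun ω => cstar L a (fun y => δ * b ω y) - 2 * √a) P :=
    hci.sub (integrable_const _)
  have i2 : Integrable (fun ω => cstar L a (fun y => δ * b ω y) - 2 * √a - δ * avg L (b ω)) P :=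
    i1.sub (hai.const_mul δ)
  have i3 : Integrable (fun ω => √a * (δ ^ 2 * QQ L (b ω))) P := (hQi.const_mul _).const_mul _
  have hint : ∫ ω, (cstar L a (fun y => δ * b ω y) - 2 * √a - δ * avg L (b ω) -
      √a * (δ ^ 2 * QQ L (b ω))) ∂P = (∫ ω, cstar L a (fun y => δ * b ω y) ∂P) - 2 * √a -
          (2 * √a * δ ^ 2 / 2) * enh := by
    rw [MeasureTheory.integral_sub i2 i3, MeasureTheory.integral_sub i1 (hai.const_mul δ),
      MeasureTheory.integral_sub hci (integrable_const _), MeasureTheory.integral_const_mul,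
      MeasureTheory.integral_const_mul, MeasureTheory.integral_const_mul,
      MeasureTheory.integral_const_mul, hmean', hQ]
    simp
    ring
  rw [← hint]
  simp only [← Real.norm_eq_abs] at hbd
  have hfin := norm_integral_le_of_norm_le (hN3.const_mul (C * δ ^ 3)) hbd
  rw [MeasureTheory.integral_const_mul, Real.norm_eq_abs] at hfin
  refine hfin.trans ?_
  have : 0 < δ ^ 3 := by positivity
  nlinarith
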